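/- arXiv:2201.02345 — 2 statements merged into one kernel-verified Lean document; each statement's English description precedes it below -/
import Mathlib

section
/- For X ∈ M_n(F_q) let d_i(X) be the number of matrices Z ∈ M_n(F_q) with [Z] ⊊ [X], and d_o(X) the number of matrices Z ∈ M_n(F_q) with [X] ⊊ [Z]. If rank(X) < rank(Y) then d_i(X) < d_i(Y) and d_o(X) > d_o(Y). Moreover, d_i(X) = d_i(Y) if and only if rank(X) = rank(Y), and d_o(X) = d_o(Y) if and only if rank(X) = rank(Y). -/
/-- The left ideal of `M_n(F)` generated by `X`: the set of all `C * X`. -/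
def leftIdeal {n : ℕ} {F : Type*} [Field F]
    (X : Matrix (Fin n) (Fin n) F) : Set (Matrix (Fin n) (Fin n) F) :=
  {A | ∃ C : Matrix (Fin n) (Fin n) F, A = C * X}

/-- In-degree of `X` in the left-ideal relation digraph: the number of `Z` with
`[Z] ⊊ [X]`. -/
noncomputable def inDeg {n : ℕ} {F : Type*} [Field F] [Fintype F]
    (X : Matrix (Fin n) (Fin n) F) : ℕ :=
  Nat.card {Z : Matrix (Fin n) (Fin n) F | leftIdeal Z ⊂ leftIdeal X}

/-- Out-degree of `X` in the left-ideal relation digraph: the number of `Z` with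
`[X] ⊊ [Z]`. -/
noncomputable def outDeg {n : ℕ} {F : Type*} [Field F] [Fintype F]
    (X : Matrix (Fin n) (Fin n) F) : ℕ :=
  Nat.card {Z : Matrix (Fin n) (Fin n) F | leftIdeal X ⊂ leftIdeal Z}

/-!
The left ideal `[X]` consists of the matrices whose rows lie in the row space of `X`, so
`[X] ⊆ [Y]` is inclusion of row spaces. Right multiplication by an invertible matrix is an
automorphism of the relation digraph, hence preserves both degrees, and it can move the row space
of `X` into that of `Y` as soon as `X.rank ≤ Y.rank`. This reduces everything to nested left
ideals, along which the degrees are visibly monotone.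
-/

section RowSpace

variable {l m n R : Type*} [Semiring R]

/-- The row space of a matrix, as a submodule of the space of row vectors; it classifies principal
left ideals of a matrix ring. -/
def rowSpace (X : Matrix m n R) : Submodule R (n → R) :=
  Submodule.span R (Set.range X.row)

theorem rowSpace_le_iff_exists_eq_mul [Fintype m] {X : Matrix l n R} {Y : Matrix m n R} :
    rowSpace X ≤ rowSpace Y ↔ ∃ C : Matrix l m R, X = C * Y := by
  rw [rowSpace, rowSpace, ← range_vecMulLinear Y, Submodule.span_le, Set.range_subset_iff]
  constructor
  · intro h
    choose C hC using h
    exact ⟨Matrix.of C, Matrix.ext_row fun i => (hC i).symm⟩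
  · rintro ⟨C, rfl⟩ i
    exact ⟨C i, rfl⟩

theorem rowSpace_mul [Fintype m] (X : Matrix l m R) (Q : Matrix m n R) :
    rowSpace (X * Q) = (rowSpace X).map Q.vecMulLinear := by
  rw [rowSpace, rowSpace, Submodule.map_span, ← Set.range_comp]
  rfl

theorem exists_units_vecMulLinear_eq [Fintype n] [DecidableEq n] (g : (n → R) ≃ₗ[R] (n → R)) :
    ∃ Q : (Matrix n n R)ˣ, Q.val.vecMulLinear = g :=
  ⟨⟨LinearMap.toMatrixRight' (g : (n → R) →ₗ[R] n → R),
      LinearMap.toMatrixRight' (g.symm : (n → R) →ₗ[R] n → R),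
      by rw [← LinearMap.toMatrixRight'_comp]; simp,
      by rw [← LinearMap.toMatrixRight'_comp]; simp⟩,
    LinearMap.toMatrixRight'.symm_apply_apply (g : (n → R) →ₗ[R] n → R)⟩

end RowSpace

theorem exists_linearEquiv_map_le_of_finrank_le {K V : Type*} [DivisionRing K] [AddCommGroup V]
    [Module K V] {p q : Submodule K V} [FiniteDimensional K p] [FiniteDimensional K q]
    (h : Module.finrank K p ≤ Module.finrank K q) :
    ∃ g : V ≃ₗ[K] V, p.map (g : V →ₗ[K] V) ≤ q := by
  obtain ⟨j, hj⟩ := finrank_le_iff_exists_linearMap.1 h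
  let k : p →ₗ[K] V := q.subtype ∘ₗ j
  have hk : Function.Injective k := q.injective_subtype.comp hj
  obtain ⟨g, hg⟩ := Submodule.exists_linearEquiv_restrict_eq (LinearEquiv.ofInjective k hk)
  refine ⟨g, Submodule.map_le_iff_le_comap.2 fun x hx => ?_⟩
  have hgx : q.subtype (j ⟨x, hx⟩) = g x := hg ⟨x, hx⟩
  exact Submodule.mem_comap.2 (hgx ▸ (j ⟨x, hx⟩).2)

theorem exists_units_rowSpace_mul_le_of_rank_le {l m n K : Type*} [Finite l] [Finite m] [Fintype n]
    [DecidableEq n] [Field K] {X : Matrix l n K} {Y : Matrix m n K} (h : X.rank ≤ Y.rank) :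
    ∃ Q : (Matrix n n K)ˣ, rowSpace (X * Q.val) ≤ rowSpace Y := by
  rw [X.rank_eq_finrank_span_row, Y.rank_eq_finrank_span_row] at h
  obtain ⟨g, hg⟩ := exists_linearEquiv_map_le_of_finrank_le h
  obtain ⟨Q, hQ⟩ := exists_units_vecMulLinear_eq g
  exact ⟨Q, by rwa [rowSpace_mul, hQ]⟩

section LeftIdeal

variable {n : ℕ} {F : Type*} [Field F] {X Y : Matrix (Fin n) (Fin n) F}

theorem leftIdeal_subset_iff_exists_eq_mul :
    leftIdeal X ⊆ leftIdeal Y ↔ ∃ C, X = C * Y := by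
  constructor
  · exact fun h => h ⟨1, (one_mul X).symm⟩
  · rintro ⟨C, rfl⟩ _ ⟨D, rfl⟩
    exact ⟨D * C, (mul_assoc D C Y).symm⟩

theorem leftIdeal_subset_iff_rowSpace_le :
    leftIdeal X ⊆ leftIdeal Y ↔ rowSpace X ≤ rowSpace Y :=
  leftIdeal_subset_iff_exists_eq_mul.trans rowSpace_le_iff_exists_eq_mul.symm

theorem rank_le_of_leftIdeal_subset (h : leftIdeal X ⊆ leftIdeal Y) : X.rank ≤ Y.rank := by
  obtain ⟨C, rfl⟩ := leftIdeal_subset_iff_exists_eq_mul.1 h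
  exact Matrix.rank_mul_le_right C Y

theorem leftIdeal_mul_units_subset_iff (Q : (Matrix (Fin n) (Fin n) F)ˣ) :
    leftIdeal (X * Q.val) ⊆ leftIdeal (Y * Q.val) ↔ leftIdeal X ⊆ leftIdeal Y := by
  simp only [leftIdeal_subset_iff_exists_eq_mul, ← mul_assoc, Units.mul_left_inj]

theorem leftIdeal_mul_units_ssubset_iff (Q : (Matrix (Fin n) (Fin n) F)ˣ) :
    leftIdeal (X * Q.val) ⊂ leftIdeal (Y * Q.val) ↔ leftIdeal X ⊂ leftIdeal Y := by
  simp only [ssubset_iff_subset_not_subset, leftIdeal_mul_units_subset_iff]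

theorem exists_units_leftIdeal_mul_subset_of_rank_le (h : X.rank ≤ Y.rank) :
    ∃ Q : (Matrix (Fin n) (Fin n) F)ˣ, leftIdeal (X * Q.val) ⊆ leftIdeal Y := by
  simpa only [leftIdeal_subset_iff_rowSpace_le] using exists_units_rowSpace_mul_le_of_rank_le h

theorem exists_units_leftIdeal_mul_ssubset_of_rank_lt (h : X.rank < Y.rank) :
    ∃ Q : (Matrix (Fin n) (Fin n) F)ˣ, leftIdeal (X * Q.val) ⊂ leftIdeal Y := by
  obtain ⟨Q, hQ⟩ := exists_units_leftIdeal_mul_subset_of_rank_le h.le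
  have hrank : (X * Q.val).rank < Y.rank :=
    (Matrix.rank_mul_le_left X _).trans_lt h
  exact ⟨Q, hQ, fun hYX => hrank.not_ge (rank_le_of_leftIdeal_subset hYX)⟩

end LeftIdeal

section Degree

variable {n : ℕ} {F : Type*} [Field F] [Fintype F] {X Y : Matrix (Fin n) (Fin n) F}

theorem inDeg_mul_units (X : Matrix (Fin n) (Fin n) F) (Q : (Matrix (Fin n) (Fin n) F)ˣ) :
    inDeg (X * Q.val) = inDeg X :=
  Eq.symm <| Nat.card_congr <|
    Q.mulRight.subtypeEquiv fun _ => (leftIdeal_mul_units_ssubset_iff Q).symm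

theorem outDeg_mul_units (X : Matrix (Fin n) (Fin n) F) (Q : (Matrix (Fin n) (Fin n) F)ˣ) :
    outDeg (X * Q.val) = outDeg X :=
  Eq.symm <| Nat.card_congr <|
    Q.mulRight.subtypeEquiv fun _ => (leftIdeal_mul_units_ssubset_iff Q).symm

theorem inDeg_le_of_leftIdeal_subset (h : leftIdeal X ⊆ leftIdeal Y) : inDeg X ≤ inDeg Y :=
  Nat.card_mono (Set.toFinite _) fun _ hZ => hZ.trans_subset h

theorem outDeg_le_of_leftIdeal_subset (h : leftIdeal X ⊆ leftIdeal Y) : outDeg Y ≤ outDeg X :=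
  Nat.card_mono (Set.toFinite _) fun _ hZ => h.trans_ssubset hZ

theorem inDeg_lt_of_leftIdeal_ssubset (h : leftIdeal X ⊂ leftIdeal Y) : inDeg X < inDeg Y :=
  Set.ncard_lt_ncard <| (Set.ssubset_iff_of_subset fun _ hZ => hZ.trans h).2
    ⟨X, h, fun hX => hX.2 subset_rfl⟩

theorem outDeg_lt_of_leftIdeal_ssubset (h : leftIdeal X ⊂ leftIdeal Y) : outDeg Y < outDeg X :=
  Set.ncard_lt_ncard <| (Set.ssubset_iff_of_subset fun _ hZ => h.trans hZ).2
    ⟨Y, h, fun hY => hY.2 subset_rfl⟩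

theorem inDeg_le_inDeg_iff_rank_le : inDeg X ≤ inDeg Y ↔ X.rank ≤ Y.rank := by
  refine ⟨fun h => not_lt.1 fun hYX => ?_, fun h => ?_⟩
  · obtain ⟨Q, hQ⟩ := exists_units_leftIdeal_mul_ssubset_of_rank_lt hYX
    exact h.not_gt (inDeg_mul_units Y Q ▸ inDeg_lt_of_leftIdeal_ssubset hQ)
  · obtain ⟨Q, hQ⟩ := exists_units_leftIdeal_mul_subset_of_rank_le h
    exact inDeg_mul_units X Q ▸ inDeg_le_of_leftIdeal_subset hQ

theorem outDeg_le_outDeg_iff_rank_le : outDeg Y ≤ outDeg X ↔ X.rank ≤ Y.rank := by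
  refine ⟨fun h => not_lt.1 fun hYX => ?_, fun h => ?_⟩
  · obtain ⟨Q, hQ⟩ := exists_units_leftIdeal_mul_ssubset_of_rank_lt hYX
    exact h.not_gt (outDeg_mul_units Y Q ▸ outDeg_lt_of_leftIdeal_ssubset hQ)
  · obtain ⟨Q, hQ⟩ := exists_units_leftIdeal_mul_subset_of_rank_le h
    exact outDeg_mul_units X Q ▸ outDeg_le_of_leftIdeal_subset hQ

end Degree

/-- Lower rank gives strictly smaller in-degree and strictly larger out-degree;
moreover in-degrees (resp. out-degrees) agree exactly when ranks agree. -/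
theorem stmt_8 {n : ℕ} {F : Type*} [Field F] [Fintype F]
    (X Y : Matrix (Fin n) (Fin n) F) :
    (X.rank < Y.rank → inDeg X < inDeg Y ∧ outDeg X > outDeg Y) ∧
    (inDeg X = inDeg Y ↔ X.rank = Y.rank) ∧
    (outDeg X = outDeg Y ↔ X.rank = Y.rank) := by
  refine ⟨fun h => ⟨?_, ?_⟩, ?_, ?_⟩
  · exact (lt_iff_lt_of_le_iff_le inDeg_le_inDeg_iff_rank_le).2 h
  · exact (lt_iff_lt_of_le_iff_le outDeg_le_outDeg_iff_rank_le).2 h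
  · simp only [le_antisymm_iff, inDeg_le_inDeg_iff_rank_le]
  · simp only [le_antisymm_iff, outDeg_le_outDeg_iff_rank_le, and_comm]
end

section
/- Let n ≥ 3 and let Ψ be an automorphism of the left-ideal relation digraph of M_n(F_q). If [Ψ(E_{e_k})] = [E_{e_k}] for every k with 1 ≤ k ≤ i, then [Ψ(E_i)] = [E_i]. -/
/-- `Ee k` is the matrix whose first row is the `k`-th standard basis vector of
`F^n` and whose other rows are zero. -/
def Ee {n : ℕ} (F : Type*) [Field F] (k : Fin n) : Matrix (Fin n) (Fin n) F :=
  Matrix.of fun i j => if (i : ℕ) = 0 ∧ j = k then 1 else 0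

/-- `Er r` is the diagonal matrix whose first `r` diagonal entries are `1` and
whose remaining entries are `0`. -/
def Er (n : ℕ) (F : Type*) [Field F] (r : ℕ) : Matrix (Fin n) (Fin n) F :=
  Matrix.diagonal (fun i => if (i : ℕ) < r then 1 else 0)

/-! A self-map of a Noetherian poset that preserves strict inequalities cannot move a point strictly
up, since its orbit would be an infinite ascending chain. The ideal `[E_i]` is the join of the
ideals `[E_{e_k}]`, `k ≤ i`; when `i ≥ 2` each of them lies strictly below `[E_i]`, so `[Ψ(E_i)]`
contains the fixed ideals `[E_{e_k}]`, hence contains `[E_i]`, hence equals it. When `i = 1`, the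
matrices `E_1` and `E_{e_1}` coincide. -/

section Order

variable {α β κ : Type*} {g : α → β} {Ψ : α → α}

theorem not_lt_apply_of_lt_imp_lt [Preorder β] [WellFoundedGT β]
    (hΨ : ∀ x y, g x < g y → g (Ψ x) < g (Ψ y)) (x : α) : ¬ g x < g (Ψ x) := by
  induction x using (InvImage.wf g (wellFounded_gt (α := β))).induction with
  | _ x ih => exact fun hx => ih (Ψ x) hx (hΨ _ _ hx)

theorem apply_eq_of_isLUB_of_lt_imp_lt [PartialOrder β] [WellFoundedGT β]
    (hΨ : ∀ x y, g x < g y → g (Ψ x) < g (Ψ y)) {s : Set κ} {y : κ → α} {x : α}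
    (hx : IsLUB ((fun k => g (y k)) '' s) (g x)) (hlt : ∀ k ∈ s, g (y k) < g x)
    (hfix : ∀ k ∈ s, g (Ψ (y k)) = g (y k)) : g (Ψ x) = g x := by
  have hle : g x ≤ g (Ψ x) := hx.2 <| Set.forall_mem_image.2 fun k hk =>
    (hfix k hk).symm.trans_le (hΨ _ _ (hlt k hk)).le
  exact (eq_of_le_of_not_lt hle (not_lt_apply_of_lt_imp_lt hΨ x)).symm

end Order

section Matrix

open Matrix

variable {ι R : Type*} [Fintype ι] [DecidableEq ι] [Semiring R]

theorem span_single_le_span_single_iff [Nontrivial R] {i j k l : ι} :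
    Ideal.span {single i k (1 : R)} ≤ Ideal.span {single j l 1} ↔ k = l := by
  rw [Ideal.span_singleton_le_iff_mem, Ideal.mem_span_singleton']
  constructor
  · rintro ⟨C, hC⟩
    by_contra hkl
    simpa [hkl] using congr_fun₂ hC i k
  · rintro rfl
    exact ⟨single i j 1, by simp⟩

theorem span_sum_single_diag (j : ι) (s : Finset ι) :
    Ideal.span {∑ k ∈ s, single k k (1 : R)} = ⨆ k ∈ s, Ideal.span {single j k 1} := by
  apply le_antisymm
  · rw [Ideal.span_singleton_le_iff_mem]
    refine sum_mem fun k hk => Ideal.mem_iSup_of_mem k <| Ideal.mem_iSup_of_mem hk ?_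
    exact Ideal.mem_span_singleton'.2 ⟨single k j 1, by simp⟩
  · refine iSup₂_le fun k hk => ?_
    rw [Ideal.span_singleton_le_iff_mem, Ideal.mem_span_singleton']
    refine ⟨single j k 1, ?_⟩
    rw [Finset.mul_sum, Finset.sum_eq_single_of_mem k hk fun l _ hlk => by simp [hlk.symm]]
    simp

theorem span_single_lt_span_sum_single_diag [Nontrivial R] (j : ι) {k : ι} {s : Finset ι}
    (hs : s.Nontrivial) (hk : k ∈ s) :
    Ideal.span {single j k (1 : R)} < Ideal.span {∑ k ∈ s, single k k 1} := by
  rw [span_sum_single_diag j]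
  obtain ⟨l, hl, hlk⟩ := hs.exists_ne k
  have hle : ∀ m ∈ s, Ideal.span {single j m (1 : R)} ≤ ⨆ m ∈ s, Ideal.span {single j m 1} :=
    fun m hm => le_iSup₂_of_le m hm le_rfl
  exact (hle k hk).lt_of_not_ge fun hge =>
    hlk (span_single_le_span_single_iff.1 ((hle l hl).trans hge))

end Matrix

section Field

variable {n : ℕ} {F : Type*} [Field F]

theorem leftIdeal_eq_coe_span (X : Matrix (Fin n) (Fin n) F) :
    leftIdeal X = (Ideal.span {X} : Ideal (Matrix (Fin n) (Fin n) F)) := by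
  ext A
  simp only [leftIdeal, Set.mem_ofPred_eq, SetLike.mem_coe, Ideal.mem_span_singleton', eq_comm]

theorem Ee_eq_single (k : Fin n) : Ee F k = Matrix.single ⟨0, k.pos⟩ k 1 := by
  ext a b
  simp only [Ee, Matrix.of_apply, Matrix.single_apply, Fin.ext_iff, eq_comm]

theorem Er_eq_sum_single (r : ℕ) :
    Er n F r = ∑ k ∈ {k : Fin n | (k : ℕ) < r}, Matrix.single k k 1 := by
  ext a b
  simp only [Er, Matrix.sum_apply, Matrix.single_apply, Matrix.diagonal_apply]
  rcases eq_or_ne a b with rfl | hab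
  · simp
  · have hne (k : Fin n) : ¬(k = a ∧ k = b) := fun ⟨hka, hkb⟩ => hab (hka.symm.trans hkb)
    simp [hab, hne]

end Field

theorem stmt_13_general {ι R : Type*} [Fintype ι] [DecidableEq ι] [Ring R] [Nontrivial R]
    [IsNoetherianRing R] (Ψ : Matrix ι ι R → Matrix ι ι R)
    (hΨ : ∀ X Y, Ideal.span {X} < Ideal.span {Y} → Ideal.span {Ψ X} < Ideal.span {Ψ Y})
    {j : ι} {s : Finset ι} (hj : j ∈ s)
    (hfix : ∀ k ∈ s, Ideal.span {Ψ (.single j k 1)} = Ideal.span {.single j k 1}) :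
    Ideal.span {Ψ (∑ k ∈ s, .single k k 1)} = Ideal.span {∑ k ∈ s, .single k k 1} := by
  rcases Finset.eq_singleton_or_nontrivial hj with rfl | hs
  · simpa using hfix j hj
  · have hjoin : IsLUB ((fun k => Ideal.span {Matrix.single j k (1 : R)}) '' s)
        (Ideal.span {∑ k ∈ s, .single k k 1}) :=
      span_sum_single_diag (R := R) j s ▸ isLUB_biSup
    exact apply_eq_of_isLUB_of_lt_imp_lt (g := fun X => Ideal.span {X}) hΨ hjoin
      (fun k hk => span_single_lt_span_sum_single_diag j hs hk) hfix

/-- If an automorphism `Ψ` of the left-ideal relation digraph of `M_n(F_q)`,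
`n ≥ 3`, fixes the ideals `[E_{e_k}]` for `1 ≤ k ≤ i`, then it fixes `[E_i]`. -/
theorem stmt_13 {n : ℕ} (hn : 3 ≤ n) {F : Type*} [Field F] [Fintype F]
    (Ψ : Matrix (Fin n) (Fin n) F → Matrix (Fin n) (Fin n) F)
    (hbij : Function.Bijective Ψ)
    (hedge : ∀ X Y : Matrix (Fin n) (Fin n) F,
      leftIdeal X ⊂ leftIdeal Y ↔ leftIdeal (Ψ X) ⊂ leftIdeal (Ψ Y))
    (i : ℕ) (hi1 : 1 ≤ i) (hin : i ≤ n)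
    (hfix : ∀ k : Fin n, (k : ℕ) < i → leftIdeal (Ψ (Ee F k)) = leftIdeal (Ee F k)) :
    leftIdeal (Ψ (Er n F i)) = leftIdeal (Er n F i) := by
  simp only [leftIdeal_eq_coe_span, SetLike.coe_set_eq, SetLike.coe_ssubset_coe, Ee_eq_single,
    Er_eq_sum_single] at hedge hfix ⊢
  exact stmt_13_general Ψ (fun X Y => (hedge X Y).1) (j := ⟨0, by omega⟩)
    (by simpa [Nat.succ_le_iff] using hi1) (by simpa using hfix)
end
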